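/- Let Λ be a numerical semigroup with enumeration λ, genus g and conductor c, and suppose the greatest common divisor d of the elements of Λ smaller than c satisfies d > 1. Then every element of Λ lying in the interval [c, c + λ_1 − 1] that is not a multiple of d is a generator of Λ. Consequently, Λ has at least λ_1 − λ_1/d generators greater than or equal to c. -/

import Mathlib

/-!
The hypothesis `1 < d` forces `Λ` to have a nonzero element below the conductor `c` (otherwise
every natural number would divide all elements below `c`, hence divide `d`). Therefore `λ₁ < c`
and `d ∣ λ₁`. If `x < c + λ₁` is a sum of two nonzero elements of `Λ`, both summands are at least
`λ₁`, hence both are below `c` and divisible by `d`, and so is `x`. This gives the first claim.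

For the second claim, the interval `[c, c + λ₁)` is contained in `Λ` and holds exactly `λ₁ / d`
multiples of `d`, so the first claim yields `λ₁ - λ₁ / d` generators in it. The cardinality in
question is meaningful because any `x ≥ c + λ₁` splits as `λ₁ + (x - λ₁)`, so that the set of
generators `≥ c` is finite.
-/

/-- A numerical semigroup: a subset of ℕ containing 0, closed under addition,
with finite complement. -/
def IsNumericalSemigroup (S : Set ℕ) : Prop :=
  0 ∈ S ∧ (∀ a ∈ S, ∀ b ∈ S, a + b ∈ S) ∧ Sᶜ.Finite

/-- The conductor: the smallest `c` such that every `n ≥ c` belongs to `S`. -/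
noncomputable def nsConductor (S : Set ℕ) : ℕ :=
  sInf {c : ℕ | ∀ n : ℕ, c ≤ n → n ∈ S}

/-- The genus: the number of gaps. -/
noncomputable def nsGenus (S : Set ℕ) : ℕ := Sᶜ.ncard

/-- The enumeration of `S`: the unique increasing bijection `ℕ → S`,
`λ_0 = 0 < λ_1 < λ_2 < ⋯`. -/
noncomputable def nsEnum (S : Set ℕ) : ℕ → ℕ := Nat.nth (· ∈ S)

/-- A generator: a nonzero element that is not a sum of two nonzero elements. -/
def IsGenerator (S : Set ℕ) (x : ℕ) : Prop :=
  x ∈ S ∧ x ≠ 0 ∧ ¬ ∃ a ∈ S, ∃ b ∈ S, a ≠ 0 ∧ b ≠ 0 ∧ a + b = x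

/-- An ordinary numerical semigroup: `{0} ∪ [c, ∞)`. -/
def IsOrdinary (S : Set ℕ) : Prop := S = {0} ∪ Set.Ici (nsConductor S)

/-- An effective generator: a generator that is ≥ the conductor. -/
def IsEffectiveGenerator (S : Set ℕ) (x : ℕ) : Prop :=
  IsGenerator S x ∧ nsConductor S ≤ x

/-- A strong generator: an effective generator `x` such that `x + λ₁` is a
generator of `S \ {x}`. -/
def IsStrongGenerator (S : Set ℕ) (x : ℕ) : Prop :=
  IsEffectiveGenerator S x ∧ IsGenerator (S \ {x}) (x + nsEnum S 1)

/-- The Frobenius number: the largest gap. -/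
noncomputable def nsFrobenius (S : Set ℕ) : ℕ := sSup Sᶜ

/-- An infinite chain of numerical semigroups: `Λ_0 = ℕ` and each `Λ_i` is
obtained from `Λ_{i+1}` by adjoining its Frobenius number. -/
def IsInfiniteChain (L : ℕ → Set ℕ) : Prop :=
  (∀ i, IsNumericalSemigroup (L i)) ∧ L 0 = Set.univ ∧
  ∀ i, L (i + 1) ≠ Set.univ ∧ L i = L (i + 1) ∪ {nsFrobenius (L (i + 1))}

/-- `T` is a descendant of `S`: `T ⊆ S` and they agree below the conductor of `S`. -/
def IsDescendant (S T : Set ℕ) : Prop :=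
  IsNumericalSemigroup T ∧ T ⊆ S ∧
  T ∩ Set.Iio (nsConductor S) = S ∩ Set.Iio (nsConductor S)

theorem mem_of_nsConductor_le {S : Set ℕ} (hS : IsNumericalSemigroup S) {n : ℕ}
    (hn : nsConductor S ≤ n) : n ∈ S := by
  have hne : {c : ℕ | ∀ n : ℕ, c ≤ n → n ∈ S}.Nonempty := by
    obtain ⟨b, hb⟩ := hS.2.2.bddAbove
    refine ⟨b + 1, fun m hm => ?_⟩
    by_contra h
    have := hb h
    omega
  exact Nat.sInf_mem hne n hn

/-- `λ₁` is the least nonzero element of the semigroup. -/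
theorem isLeast_nsEnum_one {S : Set ℕ} (hS : IsNumericalSemigroup S) :
    IsLeast {x | x ∈ S ∧ x ≠ 0} (nsEnum S 1) := by
  have hinf : (Set.ofPred (· ∈ S)).Infinite :=
    (Set.Ici_infinite (nsConductor S)).mono fun _ hn => mem_of_nsConductor_le hS hn
  have h := Nat.isLeast_nth_of_infinite hinf 1
  have h0 : Nat.nth (· ∈ S) 0 = 0 := Nat.nth_zero_of_zero hS.1
  simpa [nsEnum, h0, Nat.pos_iff_ne_zero] using h

/-- Any `a` consecutive naturals contain exactly `a - a / d` non-multiples of `d` when `d ∣ a`. -/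
theorem card_filter_Ico_not_dvd (n : ℕ) {a d : ℕ} (hd : 0 < d) (hda : d ∣ a) :
    ((Finset.Ico n (n + a)).filter (fun x => ¬ d ∣ x)).card = a - a / d := by
  have hper : Function.Periodic (fun x => d ∣ x) a := fun x => by
    simp [← Nat.dvd_add_iff_left hda]
  have hcount : Nat.count (fun x => d ∣ x) a = a / d := by
    have h := Nat.count_modEq_card a hd 0
    simpa [Nat.modEq_zero_iff_dvd, Nat.mod_eq_zero_of_dvd hda] using h
  have hmul := Nat.filter_Ico_card_eq_of_periodic n a (fun x => d ∣ x) hper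
  have hsum := Finset.card_filter_add_card_filter_not (s := Finset.Ico n (n + a)) (fun x => d ∣ x)
  rw [Nat.card_Ico] at hsum
  omega

/-- If the gcd `d` of the elements of `Λ` smaller than the
conductor `c` satisfies `d > 1`, then every element of `Λ` in `[c, c + λ_1 - 1]`
that is not a multiple of `d` is a generator; consequently `Λ` has at least
`λ_1 - λ_1/d` generators `≥ c`. -/
theorem stmt_17 (S : Set ℕ) (hS : IsNumericalSemigroup S) (d : ℕ)
    (hdiv : ∀ x ∈ S, x < nsConductor S → d ∣ x)
    (hgcd : ∀ e : ℕ, (∀ x ∈ S, x < nsConductor S → e ∣ x) → e ∣ d)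
    (hd1 : 1 < d) :
    (∀ x ∈ S, nsConductor S ≤ x → x < nsConductor S + nsEnum S 1 →
      ¬ d ∣ x → IsGenerator S x) ∧
    nsEnum S 1 - nsEnum S 1 / d ≤
      {x : ℕ | IsGenerator S x ∧ nsConductor S ≤ x}.ncard := by
  obtain ⟨⟨hl, hl0⟩, hlmin⟩ := isLeast_nsEnum_one hS
  set l := nsEnum S 1
  set c := nsConductor S
  have hlc : l < c := by
    by_contra hcl
    -- If `0` is the only element below `c`, every `e`, in particular `2 * d`, divides `d`.
    have h2 : 2 * d ∣ d := hgcd _ fun x hx hxc => by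
      have hx0 : x = 0 := by
        by_contra h0
        have := hlmin ⟨hx, h0⟩
        omega
      simp [hx0]
    have := Nat.le_of_dvd (by omega) h2
    omega
  have hdl : d ∣ l := hdiv l hl hlc
  have hgen : ∀ x ∈ S, c ≤ x → x < c + l → ¬ d ∣ x → IsGenerator S x := by
    intro x hx _ hxl hdx
    refine ⟨hx, fun h => hdx (h ▸ dvd_zero d), ?_⟩
    rintro ⟨a, ha, b, hb, ha0, hb0, rfl⟩
    have hla := hlmin ⟨ha, ha0⟩
    have hlb := hlmin ⟨hb, hb0⟩
    exact hdx (dvd_add (hdiv a ha (by omega)) (hdiv b hb (by omega)))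
  refine ⟨hgen, ?_⟩
  have hfin : {x : ℕ | IsGenerator S x ∧ c ≤ x}.Finite := by
    refine (Set.finite_Iio (c + l)).subset fun x hx => ?_
    by_contra hlt
    have hge : c + l ≤ x := not_lt.mp hlt
    exact hx.1.2.2 ⟨l, hl, x - l, mem_of_nsConductor_le hS (by omega), hl0, by omega, by omega⟩
  rw [← card_filter_Ico_not_dvd c (by omega : 0 < d) hdl, ← Set.ncard_coe_finset]
  refine Set.ncard_le_ncard (fun x hx => ?_) hfin
  simp only [Finset.coe_filter, Finset.mem_Ico, Set.mem_ofPred_eq] at hx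
  exact ⟨hgen x (mem_of_nsConductor_le hS hx.1.1) hx.1.1 hx.1.2 hx.2, hx.1.1⟩
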